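/- Let X be a random variable, M a measurable map into ℝ^d with M(X) having finite second moments, mean μ_M and covariance Σ_M. Suppose for each β > 0 we are given a positive definite matrix Σ_B(β) such that (1/2)·log det(I_d + Σ_M Σ_B(β)^{-1}) = β, and let B(β) ~ N(0, Σ_B(β)) be independent of X. Define I_true(β) := MI(X; M(X) + B(β)) and G(β) := D_KL(Law(M(X)+B(β)) ‖ N(μ_M, Σ_M + Σ_B(β))). Then for any 0 < β₁ < β₂: (i) if G(β₂) − G(β₁) ≤ β₂ − β₁, then I_true(β₁) ≤ I_true(β₂); (ii) if G(β₂) − G(β₁) > β₂ − β₁, then I_true(β₁) > I_true(β₂). -/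

import Mathlib

/-!
With `Y = M(X) + B` and `B ~ N(0, S)` independent of `X`, the mutual information and the Gaussianity
gap are both finite and satisfy

  `MI(X; Y) + D_KL(Law Y ‖ N(μ_M, Σ_M + S)) = (1/2) log det (I + Σ_M S⁻¹)`

(`information_decomposition`). Under the calibration hypothesis this reads `I_true(β) = β - G(β)` in
`ℝ`, and both claims follow by comparing the identity at `β₁` and `β₂`.

For the identity, let `g` be the density of `B`, `q` that of `Y` and `φ` that of the Gaussian
surrogate. The joint law of `(X, Y)` has density `g (y - M x)` with respect to `Law X ⊗ volume`
(`map_joint`), so the two divergences are `E[log g(B)] - E[log q(Y)]` and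
`E[log q(Y)] - E[log φ(Y)]` (`klDivM_withDensity`). Once `log q(Y)` is known to be integrable, it
cancels in the sum. Integrability holds because `|log q|` has at most quadratic growth
(`abs_log_mixture_le`) and `Y` has finite second moments. The remaining expectations only involve
second moments: `E[Bᵀ S⁻¹ B] = d`, and likewise for `Y - μ_M` with `Σ_M + S` in place of `S`
(`integral_quad`), so only the normalising constants survive (`log_const_sub`). The moments of `B` are
obtained by writing `S = A Aᵀ` and representing `N(0, S)` as the image under `A` of a product of
standard Gaussians (`mvGaussian_eq_map`).
-/

open MeasureTheory Matrix

/-- The multivariate Gaussian measure `N(μ, S)` on `ℝ^d`, given by its density with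
respect to Lebesgue measure. -/
noncomputable def mvGaussian {d : ℕ} (μ : Fin d → ℝ) (S : Matrix (Fin d) (Fin d) ℝ) :
    Measure (Fin d → ℝ) :=
  volume.withDensity fun x =>
    ENNReal.ofReal (Real.sqrt (((2 * Real.pi) ^ d * S.det)⁻¹) *
      Real.exp (-(1 / 2 : ℝ) * ((x - μ) ⬝ᵥ S⁻¹.mulVec (x - μ))))

-- Kullback–Leibler divergence between two measures, valued in `EReal`.
open scoped Classical in
noncomputable def klDivM {α : Type*} [MeasurableSpace α] (μ ν : Measure α) : EReal :=
  if μ ≪ ν ∧ Integrable (llr μ ν) μ then ((∫ x, llr μ ν x ∂μ : ℝ) : EReal) else ⊤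

/-- Mutual information `MI(U;W) = D_KL(Law(U,W) ‖ Law(U) ⊗ Law(W))`. -/
noncomputable def mutualInfo {Ω 𝓧 𝓨 : Type*} [MeasurableSpace Ω] [MeasurableSpace 𝓧]
    [MeasurableSpace 𝓨] (P : Measure Ω) (U : Ω → 𝓧) (W : Ω → 𝓨) : EReal :=
  klDivM (P.map fun ω => (U ω, W ω)) ((P.map U).prod (P.map W))

/-- Mean vector of a vector-valued random variable. -/
noncomputable def vecMean {Ω : Type*} [MeasurableSpace Ω] (P : Measure Ω) {d : ℕ}
    (f : Ω → Fin d → ℝ) : Fin d → ℝ :=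
  fun i => ∫ ω, f ω i ∂P

/-- Covariance matrix of a vector-valued random variable. -/
noncomputable def vecCov {Ω : Type*} [MeasurableSpace Ω] (P : Measure Ω) {d : ℕ}
    (f : Ω → Fin d → ℝ) : Matrix (Fin d) (Fin d) ℝ :=
  Matrix.of fun i j =>
    ∫ ω, (f ω i - vecMean P f i) * (f ω j - vecMean P f j) ∂P

/-! ### Moments of the multivariate Gaussian -/

/-- A product of copies of one density on `ℝ` has the product density on `ℝ^d`. -/
theorem pi_withDensity_ofReal {d : ℕ} (f : ℝ → ℝ) (hf0 : ∀ x, 0 ≤ f x)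
    (hfi : Integrable f)
    [IsProbabilityMeasure (volume.withDensity fun x => ENNReal.ofReal (f x))] :
    Measure.pi (fun _ : Fin d => (volume : Measure ℝ).withDensity fun x => ENNReal.ofReal (f x)) =
      (volume : Measure (Fin d → ℝ)).withDensity fun x => ENNReal.ofReal (∏ i, f (x i)) := by
  refine Measure.pi_eq fun s hs => ?_
  have hind : ∀ i, Integrable ((s i).indicator f) := fun i => hfi.indicator (hs i)
  have key : ∀ x : Fin d → ℝ, (Set.univ.pi s).indicator (fun x => ∏ i, f (x i)) x
      = ∏ i, (s i).indicator f (x i) := by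
    intro x
    by_cases hx : x ∈ Set.univ.pi s
    · rw [Set.indicator_of_mem hx]
      exact Finset.prod_congr rfl fun i _ => (Set.indicator_of_mem (hx i trivial) f).symm
    · rw [Set.indicator_of_notMem hx]
      simp only [Set.mem_pi, Set.mem_univ, true_imp_iff, not_forall] at hx
      obtain ⟨i, hi⟩ := hx
      exact (Finset.prod_eq_zero (Finset.mem_univ i) (Set.indicator_of_notMem hi f)).symm
  have h0 : ∀ i x, 0 ≤ (s i).indicator f x := fun i x => Set.indicator_nonneg (fun _ _ => hf0 _) _
  rw [withDensity_apply _ (MeasurableSet.univ_pi hs), ← lintegral_indicator (MeasurableSet.univ_pi hs)]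
  calc _ = ∫⁻ x : Fin d → ℝ, ENNReal.ofReal (∏ i, (s i).indicator f (x i)) := by
        refine lintegral_congr fun x => ?_
        rw [← key]
        by_cases hx : x ∈ Set.univ.pi s <;> simp [hx]
    _ = ENNReal.ofReal (∫ x : Fin d → ℝ, ∏ i, (s i).indicator f (x i)) := by
        rw [ofReal_integral_eq_lintegral_ofReal]
        · exact Integrable.fintype_prod hind
        · exact Filter.Eventually.of_forall fun x => Finset.prod_nonneg fun i _ => h0 i _
    _ = ∏ i, ENNReal.ofReal (∫ x, (s i).indicator f x) := by
        rw [integral_fintype_prod_volume_eq_prod (fun i => (s i).indicator f),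
          ENNReal.ofReal_prod_of_nonneg fun i _ => integral_nonneg (h0 i)]
    _ = _ := by
        refine Finset.prod_congr rfl fun i _ => ?_
        rw [withDensity_apply _ (hs i), integral_indicator (hs i),
          ofReal_integral_eq_lintegral_ofReal hfi.integrableOn
            (Filter.Eventually.of_forall fun x => hf0 x)]

theorem exists_factor {d : ℕ} {S : Matrix (Fin d) (Fin d) ℝ} (hS : S.PosDef) :
    ∃ A : Matrix (Fin d) (Fin d) ℝ, S = A * Aᵀ ∧ A.det ≠ 0 := by
  obtain ⟨A, hA⟩ : ∃ A : Matrix (Fin d) (Fin d) ℝ, S = A * Aᵀ := by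
    open scoped MatrixOrder in
    obtain ⟨C, hC⟩ := CStarAlgebra.nonneg_iff_eq_star_mul_self.mp hS.posSemidef.nonneg
    exact ⟨Cᵀ, by simpa [Matrix.star_eq_conjTranspose] using hC⟩
  refine ⟨A, hA, fun h => ?_⟩
  have := hS.det_pos
  rw [hA, Matrix.det_mul, h] at this
  simp at this

/-- `N(0, A Aᵀ)`, defined through its density, is the law of `A z` for a standard Gaussian vector
`z`; this is the linear change of variables formula. -/
theorem mvGaussian_eq_map {d : ℕ} (A : Matrix (Fin d) (Fin d) ℝ) (hA : A.det ≠ 0) :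
    mvGaussian 0 (A * Aᵀ) =
      (Measure.pi fun _ : Fin d => ProbabilityTheory.gaussianReal 0 1).map (fun z => A *ᵥ z) := by
  have h1 : ProbabilityTheory.gaussianReal 0 1 = volume.withDensity fun x => ENNReal.ofReal
      (ProbabilityTheory.gaussianPDFReal 0 1 x) :=
    ProbabilityTheory.gaussianReal_of_var_ne_zero 0 one_ne_zero
  have hp : IsProbabilityMeasure (volume.withDensity fun x => ENNReal.ofReal
      (ProbabilityTheory.gaussianPDFReal 0 1 x)) := h1 ▸ inferInstance
  rw [h1, pi_withDensity_ofReal _ (ProbabilityTheory.gaussianPDFReal_nonneg 0 1)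
    (ProbabilityTheory.integrable_gaussianPDFReal 0 1)]
  have hmeas : Measurable fun z : Fin d → ℝ => A *ᵥ z :=
    (Continuous.matrix_mulVec continuous_const continuous_id).measurable
  have hdet : IsUnit A.det := hA.isUnit
  have hmap := Real.map_matrix_volume_pi_eq_smul_volume_pi hA
  have hvol : (volume : Measure (Fin d → ℝ)) =
      ENNReal.ofReal |A.det| • (volume.map fun z : Fin d → ℝ => A *ᵥ z) := by
    have : (fun z : Fin d → ℝ => A *ᵥ z) = ⇑(toLin' A) := by ext; simp
    rw [this, hmap, smul_smul, ← ENNReal.ofReal_mul (abs_nonneg _), ← abs_mul,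
      mul_inv_cancel₀ hA]
    simp
  have hdens : Measurable fun x : Fin d → ℝ =>
      ENNReal.ofReal (Real.sqrt (((2 * Real.pi) ^ d * (A * Aᵀ).det)⁻¹) *
      Real.exp (-(1 / 2 : ℝ) * ((x - 0) ⬝ᵥ (A * Aᵀ)⁻¹.mulVec (x - 0)))) := by
    refine (Continuous.measurable ?_).ennreal_ofReal
    fun_prop
  ext s hs
  conv_lhs => rw [mvGaussian, hvol]
  rw [withDensity_smul_measure, Measure.smul_apply, withDensity_apply _ hs,
    setLIntegral_map hs hdens hmeas, Measure.map_apply hmeas hs,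
    withDensity_apply _ (hmeas hs), smul_eq_mul, ← lintegral_const_mul _ (by exact hdens.comp hmeas)]
  refine lintegral_congr fun z => ?_
  rw [← ENNReal.ofReal_mul (abs_nonneg _)]
  congr 1
  have hq : (A *ᵥ z - 0) ⬝ᵥ (A * Aᵀ)⁻¹ *ᵥ (A *ᵥ z - 0) = ∑ i, z i ^ 2 := by
    rw [sub_zero, Matrix.mul_inv_rev, Matrix.mulVec_mulVec, Matrix.mul_assoc,
      Matrix.nonsing_inv_mul _ hdet, Matrix.mul_one, Matrix.dotProduct_mulVec,
      ← Matrix.transpose_nonsing_inv, Matrix.vecMul_transpose, Matrix.mulVec_mulVec,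
      Matrix.nonsing_inv_mul _ hdet, Matrix.one_mulVec]
    simp [dotProduct, sq]
  rw [hq]
  simp only [ProbabilityTheory.gaussianPDFReal_def]
  rw [Finset.prod_mul_distrib, ← Real.exp_sum, Finset.prod_const, Finset.card_univ,
    Fintype.card_fin, ← mul_assoc]
  congr 1
  · rw [det_mul, det_transpose, Real.sqrt_inv, Real.sqrt_mul (by positivity),
      Real.sqrt_mul_self_eq_abs]
    have : |A.det| ≠ 0 := abs_ne_zero.mpr hA
    have h2 : Real.sqrt ((2 * Real.pi) ^ d) = Real.sqrt (2 * Real.pi) ^ d := by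
      rw [Real.sqrt_eq_iff_mul_self_eq (by positivity) (by positivity), ← mul_pow,
        Real.mul_self_sqrt (by positivity)]
    rw [h2]
    simp only [NNReal.coe_one, mul_one]
    rw [mul_inv, inv_pow, mul_comm, mul_assoc, inv_mul_cancel₀ this, mul_one]
  · congr 1
    rw [Finset.mul_sum]
    refine Finset.sum_congr rfl fun i _ => ?_
    simp
    ring

theorem integrable_pi_mul {d : ℕ} (k l : Fin d) :
    Integrable (fun z : Fin d → ℝ => z k * z l)
      (Measure.pi fun _ : Fin d => ProbabilityTheory.gaussianReal 0 1) := by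
  have h : ∀ i, MemLp (fun z : Fin d → ℝ => z i) 2
      (Measure.pi fun _ : Fin d => ProbabilityTheory.gaussianReal 0 1) := fun i =>
    (ProbabilityTheory.memLp_id_gaussianReal' 2 (by simp)).comp_measurePreserving
      (measurePreserving_eval (fun _ : Fin d => ProbabilityTheory.gaussianReal 0 1) i)
  exact (h k).integrable_mul (h l)

theorem integral_pi_eval {d : ℕ} (k : Fin d) :
    ∫ z : Fin d → ℝ, z k ∂(Measure.pi fun _ : Fin d => ProbabilityTheory.gaussianReal 0 1) = 0 := by
  have := integral_comp_eval (μ := fun _ : Fin d => ProbabilityTheory.gaussianReal 0 1) (i := k)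
    (f := fun x : ℝ => x) (by fun_prop)
  rw [this, ProbabilityTheory.integral_id_gaussianReal]

theorem integral_pi_mul {d : ℕ} (k l : Fin d) :
    ∫ z : Fin d → ℝ, z k * z l ∂(Measure.pi fun _ : Fin d => ProbabilityTheory.gaussianReal 0 1) =
      if k = l then 1 else 0 := by
  split_ifs with h
  · subst h
    have := integral_comp_eval (μ := fun _ : Fin d => ProbabilityTheory.gaussianReal 0 1) (i := k)
      (f := fun x : ℝ => x * x) (by fun_prop)
    rw [this]
    have hv := ProbabilityTheory.variance_fun_id_gaussianReal (μ := 0) (v := 1)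
    rw [ProbabilityTheory.variance_eq_integral (by fun_prop)] at hv
    simpa [ProbabilityTheory.integral_id_gaussianReal, sq] using hv
  · have hi := (ProbabilityTheory.iIndepFun_pi (μ := fun _ : Fin d => ProbabilityTheory.gaussianReal 0 1)
      (X := fun _ x => x) (fun _ => by fun_prop)).indepFun h
    rw [hi.integral_fun_mul_eq_mul_integral
      (measurable_pi_apply k).aestronglyMeasurable (measurable_pi_apply l).aestronglyMeasurable]
    simp [integral_pi_eval]

theorem mvGaussian_moments {d : ℕ} {S : Matrix (Fin d) (Fin d) ℝ} (hS : S.PosDef) :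
    (∀ i j, Integrable (fun b : Fin d → ℝ => b i * b j) (mvGaussian 0 S)) ∧
    (∀ i, ∫ b : Fin d → ℝ, b i ∂(mvGaussian 0 S) = 0) ∧
    (∀ i j, ∫ b : Fin d → ℝ, b i * b j ∂(mvGaussian 0 S) = S i j) := by
  obtain ⟨A, hA, hdet⟩ := exists_factor hS
  have hmeas : Measurable fun z : Fin d → ℝ => A *ᵥ z :=
    (Continuous.matrix_mulVec continuous_const continuous_id).measurable
  have hexp : ∀ (z : Fin d → ℝ) i j, (A *ᵥ z) i * (A *ᵥ z) j =
      ∑ k, ∑ l, A i k * A j l * (z k * z l) := by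
    intro z i j
    simp only [mulVec, dotProduct, Finset.sum_mul_sum]
    refine Finset.sum_congr rfl fun k _ => Finset.sum_congr rfl fun l _ => ?_
    ring
  rw [hA, mvGaussian_eq_map A hdet]
  refine ⟨fun i j => ?_, fun i => ?_, fun i j => ?_⟩
  · rw [integrable_map_measure (by fun_prop) hmeas.aemeasurable]
    simp only [Function.comp_def, hexp]
    exact integrable_finsetSum _ fun k _ => integrable_finsetSum _ fun l _ =>
      (integrable_pi_mul k l).const_mul _
  · rw [integral_map hmeas.aemeasurable (measurable_pi_apply i).aestronglyMeasurable]
    simp only [mulVec, dotProduct]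
    rw [integral_finsetSum]
    · simp [integral_const_mul, integral_pi_eval]
    · intro k _
      refine Integrable.const_mul ?_ _
      exact integrable_eval ((ProbabilityTheory.memLp_id_gaussianReal' 1 (by simp)).integrable le_rfl)
  · rw [integral_map hmeas.aemeasurable (by fun_prop)]
    simp only [hexp]
    rw [integral_finsetSum _ fun k _ => integrable_finsetSum _ fun l _ =>
      (integrable_pi_mul k l).const_mul _]
    simp_rw [integral_finsetSum _ fun l _ => (integrable_pi_mul _ l).const_mul _,
      integral_const_mul, integral_pi_mul]
    simp [Matrix.mul_apply]

/-! ### Densities of the joint law and of the observation -/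

/-- If two measures have positive densities `f`, `h` with respect to a common σ-finite measure, the
log-likelihood ratio is `log f - log h`; integrability of this difference rules out the value `⊤`. -/
theorem klDivM_withDensity {α : Type*} [MeasurableSpace α] (ρ : Measure α) [SigmaFinite ρ]
    (f h : α → ℝ) (hf : Measurable f) (hh : Measurable h) (hf0 : ∀ x, 0 < f x)
    (hh0 : ∀ x, 0 < h x)
    (hint : Integrable (fun x => Real.log (f x) - Real.log (h x))
      (ρ.withDensity fun x => ENNReal.ofReal (f x))) :
    klDivM (ρ.withDensity fun x => ENNReal.ofReal (f x))
        (ρ.withDensity fun x => ENNReal.ofReal (h x)) =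
      ((∫ x, Real.log (f x) - Real.log (h x) ∂(ρ.withDensity fun x => ENNReal.ofReal (f x)) : ℝ) :
        EReal) := by
  set ν := ρ.withDensity fun x => ENNReal.ofReal (h x) with hν
  have hrat : Measurable fun x => ENNReal.ofReal (f x / h x) := (hf.div hh).ennreal_ofReal
  have hμ : (ρ.withDensity fun x => ENNReal.ofReal (f x)) =
      ν.withDensity fun x => ENNReal.ofReal (f x / h x) := by
    rw [hν, ← withDensity_mul _ hh.ennreal_ofReal hrat]
    congr 1
    ext x
    rw [Pi.mul_apply, ← ENNReal.ofReal_mul (hh0 x).le, mul_div_cancel₀ _ (hh0 x).ne']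
  have hac : (ρ.withDensity fun x => ENNReal.ofReal (f x)) ≪ ν := by
    rw [hμ]
    exact withDensity_absolutelyContinuous _ _
  have hsf : SigmaFinite ν := SigmaFinite.withDensity_ofReal _
  have hllr : llr (ρ.withDensity fun x => ENNReal.ofReal (f x)) ν
      =ᵐ[ρ.withDensity fun x => ENNReal.ofReal (f x)]
      fun x => Real.log (f x) - Real.log (h x) := by
    have := hac.ae_eq (Measure.rnDeriv_withDensity ν hrat)
    rw [← hμ] at this
    filter_upwards [this] with x hx
    simp only [llr_def]
    rw [hx, ENNReal.toReal_ofReal (div_pos (hf0 x) (hh0 x)).le,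
      Real.log_div (hf0 x).ne' (hh0 x).ne']
  rw [klDivM, if_pos ⟨hac, hint.congr hllr.symm⟩, integral_congr_ae hllr]

/-- Conditionally on `X = x`, the noisy observation has density `y ↦ g (y - M x)`: the joint law of
`(X, M X + B)` has this density with respect to `Law X ⊗ volume`. -/
theorem map_joint {Ω 𝓧 : Type*} [MeasurableSpace Ω] [MeasurableSpace 𝓧]
    (P : Measure Ω) [IsProbabilityMeasure P] {d : ℕ}
    (X : Ω → 𝓧) (hX : Measurable X) (M : 𝓧 → Fin d → ℝ) (hM : Measurable M)
    (B : Ω → Fin d → ℝ) (hB : Measurable B) (g : (Fin d → ℝ) → ℝ) (hg : Measurable g)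
    (hlaw : P.map B = volume.withDensity fun b => ENNReal.ofReal (g b))
    (hind : ProbabilityTheory.IndepFun X B P) :
    P.map (fun ω => (X ω, M (X ω) + B ω)) =
      ((P.map X).prod volume).withDensity fun p => ENNReal.ofReal (g (p.2 - M p.1)) := by
  have : IsProbabilityMeasure (P.map X) := Measure.isProbabilityMeasure_map hX.aemeasurable
  have hXB := (ProbabilityTheory.indepFun_iff_map_prod_eq_prod_map_map hX.aemeasurable
    hB.aemeasurable).mp hind
  have hT : Measurable fun p : 𝓧 × (Fin d → ℝ) => (p.1, M p.1 + p.2) := by fun_prop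
  have hcomp : P.map (fun ω => (X ω, M (X ω) + B ω)) =
      ((P.map X).prod (P.map B)).map fun p => (p.1, M p.1 + p.2) := by
    rw [← hXB, Measure.map_map hT (hX.prodMk hB)]
    rfl
  have hsf : SigmaFinite (volume.withDensity fun b : Fin d → ℝ => ENNReal.ofReal (g b)) :=
    SigmaFinite.withDensity_ofReal _
  rw [hcomp, hlaw, prod_withDensity_right hg.ennreal_ofReal]
  ext s hs
  have hdens : Measurable fun p : 𝓧 × (Fin d → ℝ) => ENNReal.ofReal (g (p.2 - M p.1)) := by
    fun_prop
  have hm1 : Measurable fun p : 𝓧 × (Fin d → ℝ) => ENNReal.ofReal (g p.2) := by fun_prop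
  rw [Measure.map_apply hT hs, withDensity_apply _ (hT hs), withDensity_apply _ hs,
    ← lintegral_indicator (hT hs), ← lintegral_indicator hs,
    lintegral_prod _ (hm1.indicator (hT hs)).aemeasurable,
    lintegral_prod _ (hdens.indicator hs).aemeasurable]
  refine lintegral_congr fun x => ?_
  rw [← lintegral_add_left_eq_self (μ := volume) (fun y : Fin d → ℝ => s.indicator
    (fun p : 𝓧 × (Fin d → ℝ) => ENNReal.ofReal (g (p.2 - M p.1))) (x, y)) (M x)]
  refine lintegral_congr fun b => ?_
  simp only [Set.indicator, add_sub_cancel_left]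
  rfl

/-- The law of `M X + B` is the mixture of the translates of `g`. Boundedness of `g` makes the
Bochner integral defining the mixture density meaningful. -/
theorem map_signal_add_noise {Ω 𝓧 : Type*} [MeasurableSpace Ω] [MeasurableSpace 𝓧]
    (P : Measure Ω) [IsProbabilityMeasure P] {d : ℕ}
    (X : Ω → 𝓧) (hX : Measurable X) (M : 𝓧 → Fin d → ℝ) (hM : Measurable M)
    (B : Ω → Fin d → ℝ) (hB : Measurable B) (g : (Fin d → ℝ) → ℝ) (hg : Measurable g)
    (c : ℝ) (hg0 : ∀ b, 0 ≤ g b) (hgc : ∀ b, g b ≤ c)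
    (hlaw : P.map B = volume.withDensity fun b => ENNReal.ofReal (g b))
    (hind : ProbabilityTheory.IndepFun X B P) :
    P.map (fun ω => M (X ω) + B ω) =
      volume.withDensity fun y => ENNReal.ofReal (∫ ω, g (y - M (X ω)) ∂P) := by
  have : IsProbabilityMeasure (P.map X) := Measure.isProbabilityMeasure_map hX.aemeasurable
  have hj := map_joint P X hX M hM B hB g hg hlaw hind
  have hsnd : P.map (fun ω => M (X ω) + B ω) =
      (P.map (fun ω => (X ω, M (X ω) + B ω))).map Prod.snd := by
    rw [Measure.map_map measurable_snd (by fun_prop)]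
    rfl
  have hdens : Measurable fun p : 𝓧 × (Fin d → ℝ) => ENNReal.ofReal (g (p.2 - M p.1)) := by
    fun_prop
  rw [hsnd, hj]
  ext s hs
  rw [Measure.map_apply measurable_snd hs, withDensity_apply _ (measurable_snd hs),
    withDensity_apply _ hs, ← Set.univ_prod, ← Measure.prod_restrict, Measure.restrict_univ,
    lintegral_prod_symm _ hdens.aemeasurable]
  refine lintegral_congr fun y => ?_
  have hgy : Measurable fun x => g (y - M x) := by fun_prop
  rw [lintegral_map hgy.ennreal_ofReal hX, ofReal_integral_eq_lintegral_ofReal]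
  · refine Integrable.of_bound (hgy.comp hX).aestronglyMeasurable c
      (Filter.Eventually.of_forall fun ω => ?_)
    rw [Real.norm_of_nonneg (hg0 _)]
    exact hgc _
  · exact Filter.Eventually.of_forall fun ω => hg0 _

/-! ### Second moments -/

theorem integrable_quad {Ω : Type*} [MeasurableSpace Ω] {P : Measure Ω} {d : ℕ}
    {W : Ω → Fin d → ℝ} (hW : ∀ i j, Integrable (fun ω => W ω i * W ω j) P)
    (K : Matrix (Fin d) (Fin d) ℝ) :
    Integrable (fun ω => W ω ⬝ᵥ K *ᵥ W ω) P := by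
  simp only [dotProduct, mulVec, Finset.mul_sum]
  refine integrable_finsetSum _ fun i _ => integrable_finsetSum _ fun j _ => ?_
  refine ((hW i j).const_mul (K i j)).congr (Filter.Eventually.of_forall fun ω => ?_)
  simp only
  ring

theorem integral_double_sum {Ω : Type*} [MeasurableSpace Ω] {P : Measure Ω} {d : ℕ}
    {W : Ω → Fin d → ℝ} (hW : ∀ i j, Integrable (fun ω => W ω i * W ω j) P)
    (a : Fin d → Fin d → ℝ) :
    ∫ ω, ∑ i, ∑ j, a i j * (W ω i * W ω j) ∂P =
      ∑ i, ∑ j, a i j * ∫ ω, W ω i * W ω j ∂P := by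
  rw [integral_finsetSum _ fun i _ => integrable_finsetSum _ fun j _ => (hW i j).const_mul _]
  simp_rw [integral_finsetSum _ fun j _ => (hW _ j).const_mul _, integral_const_mul]

/-- If `T` is the invertible second-moment matrix of `W`, then `E[Wᵀ T⁻¹ W] = tr (T⁻¹ T) = d`. -/
theorem integral_quad {Ω : Type*} [MeasurableSpace Ω] {P : Measure Ω} {d : ℕ}
    {W : Ω → Fin d → ℝ} (hW : ∀ i j, Integrable (fun ω => W ω i * W ω j) P)
    {T : Matrix (Fin d) (Fin d) ℝ} (hT : ∀ i j, ∫ ω, W ω i * W ω j ∂P = T i j)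
    (hdet : T.det ≠ 0) :
    ∫ ω, W ω ⬝ᵥ T⁻¹ *ᵥ W ω ∂P = d := by
  have hsymm : ∀ i j, T i j = T j i := fun i j => by
    rw [← hT, ← hT]
    simp only [mul_comm]
  have h : ∀ ω, W ω ⬝ᵥ T⁻¹ *ᵥ W ω = ∑ i, ∑ j, T⁻¹ i j * (W ω i * W ω j) := by
    intro ω
    simp only [dotProduct, mulVec, Finset.mul_sum]
    refine Finset.sum_congr rfl fun i _ => Finset.sum_congr rfl fun j _ => ?_
    ring
  rw [integral_congr_ae (Filter.Eventually.of_forall h), integral_double_sum hW (fun i j => T⁻¹ i j)]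
  simp only [hT]
  calc _ = (T⁻¹ * T).trace := by
        simp only [Matrix.trace, Matrix.diag, Matrix.mul_apply]
        exact Finset.sum_congr rfl fun i _ => Finset.sum_congr rfl fun j _ => by rw [hsymm i j]
    _ = d := by rw [Matrix.nonsing_inv_mul _ hdet.isUnit, Matrix.trace_one, Fintype.card_fin]

theorem vecCov_posSemidef {Ω : Type*} [MeasurableSpace Ω] {P : Measure Ω} {d : ℕ}
    {F : Ω → Fin d → ℝ}
    (hF : ∀ i j, Integrable (fun ω => (F ω i - vecMean P F i) * (F ω j - vecMean P F j)) P) :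
    (vecCov P F).PosSemidef := by
  refine Matrix.PosSemidef.of_dotProduct_mulVec_nonneg ?_ fun v => ?_
  · ext i j
    simp [vecCov, mul_comm]
  · have : star v ⬝ᵥ vecCov P F *ᵥ v =
        ∫ ω, (∑ i, v i * (F ω i - vecMean P F i)) ^ 2 ∂P := by
      have hexp : ∀ ω, (∑ i, v i * (F ω i - vecMean P F i)) ^ 2 =
          ∑ i, ∑ j, v i * v j * ((F ω i - vecMean P F i) * (F ω j - vecMean P F j)) := by
        intro ω
        rw [sq, Finset.sum_mul_sum]
        refine Finset.sum_congr rfl fun i _ => Finset.sum_congr rfl fun j _ => ?_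
        ring
      rw [integral_congr_ae (Filter.Eventually.of_forall hexp),
        integral_double_sum (W := fun ω i => F ω i - vecMean P F i) hF (fun i j => v i * v j)]
      simp only [dotProduct, mulVec, Finset.mul_sum, vecCov, Matrix.of_apply, star_trivial]
      refine Finset.sum_congr rfl fun i _ => Finset.sum_congr rfl fun j _ => ?_
      ring
    rw [this]
    exact integral_nonneg fun ω => sq_nonneg _

/-! ### Gaussian densities and their mixtures -/

/-- The density of `N(0, S)` at `v` with respect to Lebesgue measure (for `S` positive definite), so
that `mvGaussian μ S` has density `x ↦ gaussDensity S (x - μ)`. -/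
noncomputable def gaussDensity {d : ℕ} (S : Matrix (Fin d) (Fin d) ℝ) (v : Fin d → ℝ) : ℝ :=
  Real.sqrt (((2 * Real.pi) ^ d * S.det)⁻¹) * Real.exp (-(1 / 2 : ℝ) * (v ⬝ᵥ S⁻¹.mulVec v))

theorem gaussConst_pos {d : ℕ} {S : Matrix (Fin d) (Fin d) ℝ} (hS : S.PosDef) :
    0 < Real.sqrt (((2 * Real.pi) ^ d * S.det)⁻¹) := by
  have := hS.det_pos
  positivity

theorem continuous_gaussDensity {d : ℕ} (S : Matrix (Fin d) (Fin d) ℝ) :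
    Continuous (gaussDensity S) := by
  unfold gaussDensity
  fun_prop

theorem quad_nonneg {d : ℕ} {S : Matrix (Fin d) (Fin d) ℝ} (hS : S.PosDef) (v : Fin d → ℝ) :
    0 ≤ v ⬝ᵥ S⁻¹ *ᵥ v := by
  simpa using hS.inv.posSemidef.dotProduct_mulVec_nonneg v

/-- A consequence of the parallelogram identity for the form `S⁻¹`. -/
theorem quad_sub_le {d : ℕ} {S : Matrix (Fin d) (Fin d) ℝ} (hS : S.PosDef) (u v : Fin d → ℝ) :
    (u - v) ⬝ᵥ S⁻¹ *ᵥ (u - v) ≤ 2 * (u ⬝ᵥ S⁻¹ *ᵥ u) + 2 * (v ⬝ᵥ S⁻¹ *ᵥ v) := by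
  have h := quad_nonneg hS (u + v)
  simp only [mulVec_add, mulVec_sub, dotProduct_add, add_dotProduct, dotProduct_sub,
    sub_dotProduct] at h ⊢
  linarith

theorem gaussDensity_pos {d : ℕ} {S : Matrix (Fin d) (Fin d) ℝ} (hS : S.PosDef) (v : Fin d → ℝ) :
    0 < gaussDensity S v :=
  mul_pos (gaussConst_pos hS) (Real.exp_pos _)

theorem gaussDensity_le {d : ℕ} {S : Matrix (Fin d) (Fin d) ℝ} (hS : S.PosDef) (v : Fin d → ℝ) :
    gaussDensity S v ≤ Real.sqrt (((2 * Real.pi) ^ d * S.det)⁻¹) := by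
  refine mul_le_of_le_one_right (Real.sqrt_nonneg _) (Real.exp_le_one_iff.mpr ?_)
  linarith [quad_nonneg hS v]

theorem log_gaussDensity {d : ℕ} {S : Matrix (Fin d) (Fin d) ℝ} (hS : S.PosDef) (v : Fin d → ℝ) :
    Real.log (gaussDensity S v) =
      Real.log (Real.sqrt (((2 * Real.pi) ^ d * S.det)⁻¹)) - 1 / 2 * (v ⬝ᵥ S⁻¹ *ᵥ v) := by
  rw [gaussDensity, Real.log_mul (gaussConst_pos hS).ne' (Real.exp_pos _).ne', Real.log_exp]
  ring

/-- The expected Gaussian log-density depends on `W` only through its second moments, and when those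
match the covariance `T` of the Gaussian it equals minus the entropy of `N(0, T)`. -/
theorem integral_log_gaussDensity {Ω : Type*} [MeasurableSpace Ω] {P : Measure Ω}
    [IsProbabilityMeasure P] {d : ℕ} {W : Ω → Fin d → ℝ}
    (hW : ∀ i j, Integrable (fun ω => W ω i * W ω j) P)
    {T : Matrix (Fin d) (Fin d) ℝ} (hT : ∀ i j, ∫ ω, W ω i * W ω j ∂P = T i j)
    (hTpd : T.PosDef) :
    Integrable (fun ω => Real.log (gaussDensity T (W ω))) P ∧
      ∫ ω, Real.log (gaussDensity T (W ω)) ∂P =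
        Real.log (Real.sqrt (((2 * Real.pi) ^ d * T.det)⁻¹)) - 1 / 2 * d := by
  simp only [log_gaussDensity hTpd]
  have hq := (integrable_quad hW T⁻¹).const_mul (1 / 2)
  refine ⟨(integrable_const _).sub hq, ?_⟩
  rw [integral_sub (integrable_const _) hq, integral_const_mul,
    integral_quad hW hT hTpd.det_pos.ne']
  simp

/-- The logarithm of a Gaussian mixture density grows at most quadratically. The upper bound is the
maximum of the Gaussian density; the lower bound comes from
`gaussDensity S (y - F) ≥ c * exp (-yᵀ S⁻¹ y) * exp (-Fᵀ S⁻¹ F)`. -/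
theorem abs_log_mixture_le {Ω : Type*} [MeasurableSpace Ω] (P : Measure Ω)
    [IsProbabilityMeasure P] {d : ℕ} {S : Matrix (Fin d) (Fin d) ℝ} (hS : S.PosDef)
    (F : Ω → Fin d → ℝ) (hF : Measurable F) :
    (∀ y, 0 < ∫ ω, gaussDensity S (y - F ω) ∂P) ∧
    ∃ C : ℝ, ∀ y, |Real.log (∫ ω, gaussDensity S (y - F ω) ∂P)| ≤ C + y ⬝ᵥ S⁻¹ *ᵥ y := by
  set c := Real.sqrt (((2 * Real.pi) ^ d * S.det)⁻¹) with hc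
  have hc0 : 0 < c := gaussConst_pos hS
  have hgm := (continuous_gaussDensity S).measurable
  have hint : ∀ y, Integrable (fun ω => gaussDensity S (y - F ω)) P := by
    intro y
    refine Integrable.of_bound (hgm.comp (measurable_const.sub hF)).aestronglyMeasurable c
      (Filter.Eventually.of_forall fun ω => ?_)
    rw [Real.norm_of_nonneg (gaussDensity_pos hS _).le]
    exact gaussDensity_le hS _
  have hquadm : Measurable fun ω => F ω ⬝ᵥ S⁻¹ *ᵥ F ω := by
    have : Continuous fun v : Fin d → ℝ => v ⬝ᵥ S⁻¹ *ᵥ v := by fun_prop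
    exact this.measurable.comp hF
  have hint2 : Integrable (fun ω => Real.exp (-(F ω ⬝ᵥ S⁻¹ *ᵥ F ω))) P := by
    refine Integrable.of_bound (by fun_prop) 1 (Filter.Eventually.of_forall fun ω => ?_)
    rw [Real.norm_of_nonneg (Real.exp_pos _).le, Real.exp_le_one_iff]
    linarith [quad_nonneg hS (F ω)]
  set k := ∫ ω, Real.exp (-(F ω ⬝ᵥ S⁻¹ *ᵥ F ω)) ∂P with hk
  have hk0 : 0 < k := integral_exp_pos hint2
  have hlow : ∀ y, c * Real.exp (-(y ⬝ᵥ S⁻¹ *ᵥ y)) * k ≤ ∫ ω, gaussDensity S (y - F ω) ∂P := by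
    intro y
    rw [hk, ← integral_const_mul]
    refine integral_mono (hint2.const_mul _) (hint y) fun ω => ?_
    simp only [gaussDensity]
    rw [mul_assoc, ← Real.exp_add]
    refine mul_le_mul_of_nonneg_left (Real.exp_le_exp.mpr ?_) hc0.le
    linarith [quad_sub_le hS y (F ω)]
  have hpos : ∀ y, 0 < ∫ ω, gaussDensity S (y - F ω) ∂P := fun y =>
    lt_of_lt_of_le (mul_pos (mul_pos hc0 (Real.exp_pos _)) hk0) (hlow y)
  refine ⟨hpos, |Real.log c| + |Real.log k|, fun y => ?_⟩
  have hup : ∫ ω, gaussDensity S (y - F ω) ∂P ≤ c := by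
    calc _ ≤ ∫ _ω, c ∂P := integral_mono (hint y) (integrable_const _) fun ω => gaussDensity_le hS _
      _ = c := by simp
  have h1 := Real.log_le_log (hpos y) hup
  have h2 := Real.log_le_log (mul_pos (mul_pos hc0 (Real.exp_pos _)) hk0) (hlow y)
  rw [Real.log_mul (mul_pos hc0 (Real.exp_pos _)).ne' hk0.ne',
    Real.log_mul hc0.ne' (Real.exp_pos _).ne', Real.log_exp] at h2
  have h3 := quad_nonneg hS y
  rw [abs_le]
  constructor
  · linarith [neg_abs_le (Real.log c), neg_abs_le (Real.log k)]
  · linarith [le_abs_self (Real.log c), abs_nonneg (Real.log k)]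

/-- The difference of the log-normalising constants is the Gaussian surrogate bound, since
`det (1 + T S⁻¹) = det (T + S) / det S`. -/
theorem log_const_sub {d : ℕ} {S T : Matrix (Fin d) (Fin d) ℝ} (hS : S.PosDef)
    (hT : (T + S).PosDef) :
    Real.log (Real.sqrt (((2 * Real.pi) ^ d * S.det)⁻¹)) -
      Real.log (Real.sqrt (((2 * Real.pi) ^ d * (T + S).det)⁻¹)) =
      1 / 2 * Real.log ((1 + T * S⁻¹).det) := by
  have hs := hS.det_pos
  have ht := hT.det_pos
  have hpi : (0 : ℝ) < (2 * Real.pi) ^ d := by positivity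
  have hdet : (1 + T * S⁻¹).det = (T + S).det / S.det := by
    rw [eq_div_iff hs.ne', ← det_mul, add_mul, one_mul, mul_assoc,
      nonsing_inv_mul _ hs.ne'.isUnit, mul_one, add_comm]
  rw [hdet, Real.log_div ht.ne' hs.ne', Real.log_sqrt (by positivity), Real.log_sqrt (by positivity),
    Real.log_inv, Real.log_inv, Real.log_mul hpi.ne' hs.ne', Real.log_mul hpi.ne' ht.ne']
  ring

/-! ### Mutual information plus Gaussianity gap -/

/-- Both the mutual information and the Gaussianity gap are finite, and they add up to the Gaussian
surrogate bound. -/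
theorem information_decomposition {Ω 𝓧 : Type*} [MeasurableSpace Ω] [MeasurableSpace 𝓧]
    (P : Measure Ω) [IsProbabilityMeasure P] {d : ℕ}
    (X : Ω → 𝓧) (hX : Measurable X) (M : 𝓧 → Fin d → ℝ) (hM : Measurable M)
    (hM2 : ∀ i j, Integrable (fun ω => M (X ω) i * M (X ω) j) P)
    {S : Matrix (Fin d) (Fin d) ℝ} (hS : S.PosDef)
    (B : Ω → Fin d → ℝ) (hB : Measurable B) (hlaw : P.map B = mvGaussian 0 S)
    (hind : ProbabilityTheory.IndepFun X B P) :
    ∃ r : ℝ, mutualInfo P X (fun ω => M (X ω) + B ω) = (r : EReal) ∧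
      klDivM (P.map fun ω => M (X ω) + B ω)
        (mvGaussian (vecMean P fun ω => M (X ω)) (vecCov P (fun ω => M (X ω)) + S)) =
        ((1 / 2 * Real.log ((1 + vecCov P (fun ω => M (X ω)) * S⁻¹).det) - r : ℝ) : EReal) := by
  set F : Ω → Fin d → ℝ := fun ω => M (X ω) with hFdef
  have hF : Measurable F := hM.comp hX
  have hFi : ∀ i, Measurable fun ω => F ω i := fun i => (measurable_pi_apply i).comp hF
  have hBi : ∀ i, Measurable fun ω => B ω i := fun i => (measurable_pi_apply i).comp hB
  set m := vecMean P F with hm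
  have hFL : ∀ i, MemLp (fun ω => F ω i) 2 P := fun i => by
    rw [memLp_two_iff_integrable_sq (hFi i).aestronglyMeasurable]
    simpa only [sq] using hM2 i i
  have hCL : ∀ i, MemLp (fun ω => F ω i - m i) 2 P := fun i => (hFL i).sub (memLp_const _)
  obtain ⟨hg1, hg2, hg3⟩ := mvGaussian_moments hS
  rw [← hlaw] at hg1 hg2 hg3
  have hBB : ∀ i j, Integrable (fun ω => B ω i * B ω j) P := fun i j =>
    (integrable_map_measure (by fun_prop) hB.aemeasurable).mp (hg1 i j)
  have hB0 : ∀ i, ∫ ω, B ω i ∂P = 0 := fun i => by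
    rw [← hg2 i, integral_map hB.aemeasurable (measurable_pi_apply i).aestronglyMeasurable]
  have hB2 : ∀ i j, ∫ ω, B ω i * B ω j ∂P = S i j := fun i j => by
    rw [← hg3 i j, integral_map hB.aemeasurable (by fun_prop)]
  have hBL : ∀ i, MemLp (fun ω => B ω i) 2 P := fun i => by
    rw [memLp_two_iff_integrable_sq (hBi i).aestronglyMeasurable]
    simpa only [sq] using hBB i i
  have hCC : ∀ i j, Integrable (fun ω => (F ω i - m i) * (F ω j - m j)) P := fun i j =>
    (hCL i).integrable_mul (hCL j)
  have hCB : ∀ i j, Integrable (fun ω => (F ω i - m i) * B ω j) P := fun i j =>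
    (hCL i).integrable_mul (hBL j)
  have hCB0 : ∀ i j, ∫ ω, (F ω i - m i) * B ω j ∂P = 0 := fun i j => by
    have hi : ProbabilityTheory.IndepFun (fun ω => F ω i - m i) (fun ω => B ω j) P :=
      hind.comp (φ := fun x => M x i - m i) (ψ := fun b : Fin d → ℝ => b j)
        (((measurable_pi_apply i).comp hM).sub measurable_const) (measurable_pi_apply j)
    rw [hi.integral_fun_mul_eq_mul_integral (hCL i).aestronglyMeasurable
      (hBL j).aestronglyMeasurable, hB0, mul_zero]
  set Y : Ω → Fin d → ℝ := fun ω => F ω + B ω with hYdef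
  have hY : Measurable Y := hF.add hB
  have hYL : ∀ i, MemLp (fun ω => Y ω i) 2 P := fun i => (hFL i).add (hBL i)
  have hZL : ∀ i, MemLp (fun ω => (Y ω - m) i) 2 P := fun i => (hYL i).sub (memLp_const _)
  have hZZ : ∀ i j, Integrable (fun ω => (Y ω - m) i * (Y ω - m) j) P := fun i j =>
    (hZL i).integrable_mul (hZL j)
  have hYY : ∀ i j, Integrable (fun ω => Y ω i * Y ω j) P := fun i j =>
    (hYL i).integrable_mul (hYL j)
  set T := vecCov P F with hTdef
  have hZ2 : ∀ i j, ∫ ω, (Y ω - m) i * (Y ω - m) j ∂P = (T + S) i j := fun i j => by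
    have : ∀ ω, (Y ω - m) i * (Y ω - m) j = (F ω i - m i) * (F ω j - m j) +
        (F ω i - m i) * B ω j + (F ω j - m j) * B ω i + B ω i * B ω j := by
      intro ω
      simp only [hYdef, Pi.sub_apply, Pi.add_apply]
      ring
    simp only [this]
    rw [integral_add (((hCC i j).fun_add (hCB i j)).fun_add (hCB j i)) (hBB i j),
      integral_add ((hCC i j).fun_add (hCB i j)) (hCB j i), integral_add (hCC i j) (hCB i j),
      hCB0, hCB0, hB2]
    simp [hTdef, vecCov, hm]
  have hTS : (T + S).PosDef := hS.posSemidef_add (vecCov_posSemidef hCC)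
  -- `q` is the density of `Y`, the mixture of the translates of the noise density `g`.
  set g := gaussDensity S with hg
  have hgm : Measurable g := (continuous_gaussDensity S).measurable
  have hlaw' : P.map B = volume.withDensity fun b => ENNReal.ofReal (g b) := by
    rw [hlaw]
    simp [mvGaussian, hg, gaussDensity]
  obtain ⟨hq0, C, hqC⟩ := abs_log_mixture_le P hS F hF
  set q : (Fin d → ℝ) → ℝ := fun y => ∫ ω, g (y - F ω) ∂P with hq
  have hqm : Measurable q := by
    refine (StronglyMeasurable.integral_prod_right (f := fun y ω => g (y - F ω)) ?_).measurable
    exact (hgm.comp (measurable_fst.sub (hF.comp measurable_snd))).stronglyMeasurable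
  have hYlaw : P.map Y = volume.withDensity fun y => ENNReal.ofReal (q y) :=
    map_signal_add_noise P X hX M hM B hB g hgm _ (fun b => (gaussDensity_pos hS b).le)
      (gaussDensity_le hS) hlaw' hind
  have hjoint : P.map (fun ω => (X ω, Y ω)) = _ := map_joint P X hX M hM B hB g hgm hlaw' hind
  -- The quadratic growth of `log q` and the second moments of `Y` keep all quantities finite.
  have hlogq : Integrable (fun ω => Real.log (q (Y ω))) P := by
    refine Integrable.mono' ((integrable_const C).add (integrable_quad hYY S⁻¹))
      (Real.measurable_log.comp (hqm.comp hY)).aestronglyMeasurable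
      (Filter.Eventually.of_forall fun ω => ?_)
    exact hqC (Y ω)
  obtain ⟨hIg, hEg⟩ := integral_log_gaussDensity hBB hB2 hS
  obtain ⟨hIT, hET⟩ := integral_log_gaussDensity hZZ hZ2 hTS
  have hXp : IsProbabilityMeasure (P.map X) := Measure.isProbabilityMeasure_map hX.aemeasurable
  have hXY : Measurable fun ω => (X ω, Y ω) := hX.prodMk hY
  have hYM : ∀ ω, Y ω - M (X ω) = B ω := fun ω => by simp [hYdef, hFdef]
  refine ⟨∫ ω, Real.log (g (B ω)) - Real.log (q (Y ω)) ∂P, ?_, ?_⟩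
  · have hfm : Measurable fun p : 𝓧 × (Fin d → ℝ) => g (p.2 - M p.1) := by fun_prop
    have hhm : Measurable fun p : 𝓧 × (Fin d → ℝ) => q p.2 := by fun_prop
    have hsf : SigmaFinite (volume.withDensity fun y : Fin d → ℝ => ENNReal.ofReal (q y)) :=
      SigmaFinite.withDensity_ofReal _
    have hLm : Measurable fun p : 𝓧 × (Fin d → ℝ) =>
        Real.log (g (p.2 - M p.1)) - Real.log (q p.2) :=
      (Real.measurable_log.comp hfm).sub (Real.measurable_log.comp hhm)
    have hint : Integrable (fun p : 𝓧 × (Fin d → ℝ) =>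
        Real.log (g (p.2 - M p.1)) - Real.log (q p.2)) (P.map fun ω => (X ω, Y ω)) := by
      rw [integrable_map_measure hLm.aestronglyMeasurable hXY.aemeasurable]
      simp only [Function.comp_def, hYM]
      exact hIg.sub hlogq
    have hkl := klDivM_withDensity ((P.map X).prod volume)
      (fun p : 𝓧 × (Fin d → ℝ) => g (p.2 - M p.1)) (fun p => q p.2) hfm hhm
      (fun p => gaussDensity_pos hS _) (fun p => hq0 _) (by rw [← hjoint]; exact hint)
    rw [← hjoint, integral_map hXY.aemeasurable hLm.aestronglyMeasurable] at hkl
    simp only [hYM] at hkl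
    rw [mutualInfo, hYlaw, prod_withDensity_right hqm.ennreal_ofReal]
    exact hkl
  · have hfm : Measurable fun y : Fin d → ℝ => gaussDensity (T + S) (y - m) :=
      (continuous_gaussDensity _).measurable.comp (measurable_id.sub measurable_const)
    have hLm : Measurable fun y : Fin d → ℝ =>
        Real.log (q y) - Real.log (gaussDensity (T + S) (y - m)) :=
      (Real.measurable_log.comp hqm).sub (Real.measurable_log.comp hfm)
    have hint : Integrable (fun y : Fin d → ℝ =>
        Real.log (q y) - Real.log (gaussDensity (T + S) (y - m))) (P.map Y) := by
      rw [integrable_map_measure hLm.aestronglyMeasurable hY.aemeasurable]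
      exact hlogq.sub hIT
    have hkl := klDivM_withDensity volume q (fun y => gaussDensity (T + S) (y - m)) hqm hfm
      hq0 (fun y => gaussDensity_pos hTS _) (by rw [← hYlaw]; exact hint)
    rw [← hYlaw, integral_map hY.aemeasurable hLm.aestronglyMeasurable,
      integral_sub hlogq hIT, hET] at hkl
    rw [integral_sub hIg hlogq, hEg, ← log_const_sub hS hTS]
    refine hkl.trans ?_
    congr 1
    ring

/-- For each budget `β > 0` let `S_B(β)` be positive definite with
`(1/2) log det(I + S_M S_B(β)⁻¹) = β`, let `B(β) ~ N(0, S_B(β))` be independent of `X`,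
and set `I_true(β) = MI(X; M(X) + B(β))` and
`G(β) = D_KL(Law(M(X)+B(β)) ‖ N(μ_M, S_M + S_B(β)))`. Then for `0 < β₁ < β₂`:
(i) if `G(β₂) − G(β₁) ≤ β₂ − β₁` then `I_true(β₁) ≤ I_true(β₂)`;
(ii) if `G(β₂) − G(β₁) > β₂ − β₁` then `I_true(β₁) > I_true(β₂)`. -/
theorem stmt5 {Ω 𝓧 : Type*} [MeasurableSpace Ω] [MeasurableSpace 𝓧]
    (P : Measure Ω) [IsProbabilityMeasure P] {d : ℕ}
    (X : Ω → 𝓧) (hX : Measurable X)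
    (M : 𝓧 → Fin d → ℝ) (hM : Measurable M)
    (hM2 : ∀ i j, Integrable (fun ω => M (X ω) i * M (X ω) j) P)
    (μM : Fin d → ℝ) (hμM : μM = vecMean P fun ω => M (X ω))
    (SM : Matrix (Fin d) (Fin d) ℝ) (hSM : SM = vecCov P fun ω => M (X ω))
    (SB : ℝ → Matrix (Fin d) (Fin d) ℝ)
    (hSBpd : ∀ β : ℝ, 0 < β → (SB β).PosDef)
    (hSBcal : ∀ β : ℝ, 0 < β →
      (1 / 2 : ℝ) * Real.log ((1 + SM * (SB β)⁻¹).det) = β)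
    (B : ℝ → Ω → Fin d → ℝ) (hBmeas : ∀ β, Measurable (B β))
    (hBlaw : ∀ β : ℝ, 0 < β → P.map (B β) = mvGaussian 0 (SB β))
    (hindep : ∀ β : ℝ, 0 < β → ProbabilityTheory.IndepFun X (B β) P)
    (Itrue G : ℝ → EReal)
    (hI : ∀ β, Itrue β = mutualInfo P X fun ω => M (X ω) + B β ω)
    (hG : ∀ β, G β = klDivM (P.map fun ω => M (X ω) + B β ω)
      (mvGaussian μM (SM + SB β)))
    (β₁ β₂ : ℝ) (hβ₁ : 0 < β₁) (hβ₁₂ : β₁ < β₂) :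
    (G β₂ - G β₁ ≤ ((β₂ - β₁ : ℝ) : EReal) → Itrue β₁ ≤ Itrue β₂) ∧
      (((β₂ - β₁ : ℝ) : EReal) < G β₂ - G β₁ → Itrue β₂ < Itrue β₁) := by
  -- Calibration turns the decomposition into `I_true(β) = β - G(β)`, with both sides finite.
  have key : ∀ β : ℝ, 0 < β → ∃ r : ℝ, Itrue β = (r : EReal) ∧ G β = ((β - r : ℝ) : EReal) := by
    intro β hβ
    obtain ⟨r, h1, h2⟩ := information_decomposition P X hX M hM hM2 (hSBpd β hβ) (B β) (hBmeas β)
      (hBlaw β hβ) (hindep β hβ)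
    refine ⟨r, (hI β).trans h1, ?_⟩
    rw [hG, hμM, hSM, h2, ← hSM, hSBcal β hβ]
  obtain ⟨r₁, hI₁, hG₁⟩ := key β₁ hβ₁
  obtain ⟨r₂, hI₂, hG₂⟩ := key β₂ (hβ₁.trans hβ₁₂)
  rw [hI₁, hI₂, hG₁, hG₂, ← EReal.coe_sub, EReal.coe_le_coe_iff, EReal.coe_le_coe_iff,
    EReal.coe_lt_coe_iff, EReal.coe_lt_coe_iff]
  constructor <;> intro h <;> linarith
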